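/- For every n ≥ 8, every symmetric cost function c on ℤ/nℤ, and every complete selection S = (i₁,i₂,i₃,i₄), the gain of the two-bridges move r₂₅ = (+4,+3,+2) decomposes as the sum of two parallel-bridge costs: Δ_{r₂₅}(i₁,i₂,i₃,i₄) = cost_d(i₁,i₃) + cost_d(i₂,i₄). -/

import Mathlib

/-- A 4-OPT reinsertion scheme is encoded as a triple of signed integers
`(s₁p₁, s₂p₂, s₃p₃)` where `(p₁,p₂,p₃)` is a permutation of `(2,3,4)`
and each sign is `+` or `−`. -/
abbrev Scheme := ℤ × ℤ × ℤ

/-- The two possible signs. -/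
def signsF : Finset ℤ := {1, -1}

/-- The six permutations of `(2,3,4)`. -/
def permsF : Finset (ℤ × ℤ × ℤ) := {(2,3,4), (2,4,3), (3,2,4), (3,4,2), (4,2,3), (4,3,2)}

/-- All 48 reinsertion schemes. -/
def allSchemes : Finset Scheme :=
  ((signsF ×ˢ signsF ×ˢ signsF) ×ˢ permsF).image
    (fun x => (x.1.1 * x.2.1, x.1.2.1 * x.2.2.1, x.1.2.2 * x.2.2.2))

/-- The 8 schemes with a fixed underlying permutation `(p.1, p.2.1, p.2.2)`,
obtained by choosing the three signs freely. -/
def schemesOfPerm (p : ℤ × ℤ × ℤ) : Finset Scheme :=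
  (signsF ×ˢ signsF ×ˢ signsF).image
    (fun s => (s.1 * p.1, s.2.1 * p.2.1, s.2.2 * p.2.2))

/-- A scheme `(e₁,e₂,e₃)` is pure if its first entry is not `+2`, its last entry is
not `+4`, and no two consecutive entries are of the form `+t, +(t+1)` or `−t, −(t−1)`. -/
def IsPure (e : Scheme) : Prop :=
  e.1 ≠ 2 ∧ e.2.2 ≠ 4 ∧
  ¬ (0 < e.1 ∧ 0 < e.2.1 ∧ e.2.1 = e.1 + 1) ∧
  ¬ (e.1 < 0 ∧ e.2.1 < 0 ∧ e.2.1 = e.1 + 1) ∧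
  ¬ (0 < e.2.1 ∧ 0 < e.2.2 ∧ e.2.2 = e.2.1 + 1) ∧
  ¬ (e.2.1 < 0 ∧ e.2.2 < 0 ∧ e.2.2 = e.2.1 + 1)

instance : DecidablePred IsPure := fun e => by unfold IsPure; infer_instance

/-- A label is a pair `(l, p)` where `l ∈ ZMod 4` stands for the segment index
(`1,2,3` and `0` standing for `4`) and `p` tells whether the label is primed. -/
abbrev Label := ZMod 4 × Bool

/-- Entry label of the oriented segment `e` (`e = +l` or `e = -l`):
`+l` has entry `(l⊖1)'` and `−l` has entry `l` (plain). -/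
def entryL (e : ℤ) : Label :=
  if 0 < e then ((e : ZMod 4) - 1, true) else (-(e : ZMod 4), false)

/-- Exit label of the oriented segment `e`:
`+l` has exit `l` (plain) and `−l` has exit `(l⊖1)'`. -/
def exitL (e : ℤ) : Label :=
  if 0 < e then ((e : ZMod 4), false) else (-(e : ZMod 4) - 1, true)

/-- The reinsertion set `I(r)` of a scheme `r = (e₁,e₂,e₃)`: joining exits to entries
along the cyclic sequence of oriented segments `(+1, e₁, e₂, e₃)`. -/
def reins (r : Scheme) : Finset (Sym2 Label) :=
  {s(exitL 1, entryL r.1), s(exitL r.1, entryL r.2.1),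
   s(exitL r.2.1, entryL r.2.2), s(exitL r.2.2, entryL 1)}

/-- The edges of the tour `0 → 1 → ⋯ → (n−1) → 0` on `ZMod n`. -/
def tourEdges (n : ℕ) : Set (Sym2 (ZMod n)) := {e | ∃ v : ZMod n, e = s(v, v + 1)}

/-- A complete selection: indices `0 ≤ i₁ < i₂ < i₃ < i₄ ≤ n − 1` such that no
`i_h + 1 (mod n)` is again a selection index. -/
structure CompleteSelection (n : ℕ) where
  i : Fin 4 → ℕ
  mono : StrictMono i
  le : i 3 ≤ n - 1
  complete : ∀ h k : Fin 4, (i h + 1) % n ≠ i k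

/-- The removal set `R(S)` of a selection, as edges of `ZMod n`. -/
def removalSet {n : ℕ} (S : CompleteSelection n) : Finset (Sym2 (ZMod n)) :=
  Finset.univ.image (fun k : Fin 4 => s(((S.i k : ZMod n)), (S.i k : ZMod n) + 1))

/-- Instantiation of a label at a selection: label `l` becomes the vertex `i_l`
and label `l'` becomes the vertex `i_l + 1 (mod n)`. -/
def instLabel {n : ℕ} (S : CompleteSelection n) (x : Label) : ZMod n :=
  ((S.i ⟨(x.1 - 1).val, ZMod.val_lt _⟩ : ℕ) : ZMod n) + (if x.2 then 1 else 0)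

/-- The instantiated reinsertion set `I_S(r)`. -/
def instReins {n : ℕ} (S : CompleteSelection n) (r : Scheme) : Finset (Sym2 (ZMod n)) :=
  (reins r).image (Sym2.map (instLabel S))

/-- A simple graph "is a Hamiltonian cycle" if it has a Hamiltonian cycle
whose edges are exactly all the edges of the graph. -/
def IsHamCycleGraph {V : Type*} [DecidableEq V] (G : SimpleGraph V) : Prop :=
  ∃ (v : V) (w : G.Walk v v), w.IsHamiltonianCycle ∧ {e | e ∈ w.edges} = G.edgeSet

/-- Cost of an unordered pair under a symmetric cost function. -/
def pairCost {n : ℕ} (c : ZMod n → ZMod n → ℝ) (hc : ∀ x y, c x y = c y x) :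
    Sym2 (ZMod n) → ℝ := Sym2.lift ⟨c, hc⟩

/-- The gain `Δ_r(S) = c(R(S)) − c(I_S(r))` of the 4-OPT move given by scheme `r`
on selection `S`. -/
def gain {n : ℕ} (c : ZMod n → ZMod n → ℝ) (hc : ∀ x y, c x y = c y x)
    (S : CompleteSelection n) (r : Scheme) : ℝ :=
  ∑ e ∈ removalSet S, pairCost c hc e - ∑ e ∈ instReins S r, pairCost c hc e

/-- The parallel-bridge cost `cost_d`. -/
def costD {n : ℕ} (c : ZMod n → ZMod n → ℝ) (a b : ZMod n) : ℝ :=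
  c a (a + 1) + c b (b + 1) - c a (b + 1) - c (a + 1) b

/-- The crossed-bridge cost `cost_c`. -/
def costC {n : ℕ} (c : ZMod n → ZMod n → ℝ) (a b : ZMod n) : ℝ :=
  c a (a + 1) + c b (b + 1) - c a b - c (a + 1) (b + 1)

/-!
Traversing every segment forwards, the two-bridges move joins each label `l` to the primed label
opposite it. The removed edges and the inserted edges are thus both of the form
`{i_k, i_{σ k} + 1}`, with `σ k = k` and `σ k = k + 2` respectively. The vertices `i_k` are distinct
and none of them is an `i_h + 1`, so for either `σ` the four edges are distinct, and both cost sums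
can be taken over the index `k`. Grouping `k` with `k + 2` gives the two parallel-bridge costs.
-/

namespace CompleteSelection

variable {n : ℕ} (S : CompleteSelection n)

theorem i_lt (k : Fin 4) : S.i k < n := by
  have h_pos : 0 < S.i 3 := (Nat.zero_le _).trans_lt (S.mono (show (0 : Fin 4) < 3 by decide))
  have h_le : S.i k ≤ S.i 3 := S.mono.monotone (Fin.le_last k)
  have := S.le
  omega

theorem natCast_i_injective : Function.Injective fun k => (S.i k : ZMod n) := fun h k hk =>
  S.mono.injective <|
    ((ZMod.natCast_eq_natCast_iff _ _ n).1 hk).eq_of_lt_of_lt (S.i_lt h) (S.i_lt k)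

theorem natCast_i_ne_natCast_i_add_one (h k : Fin 4) : (S.i h : ZMod n) ≠ S.i k + 1 := by
  intro heq
  have hmod : S.i h % n = (S.i k + 1) % n :=
    (ZMod.natCast_eq_natCast_iff' _ _ n).1 (by exact_mod_cast heq)
  rw [Nat.mod_eq_of_lt (S.i_lt h)] at hmod
  exact S.complete k h hmod.symm

/-- The edge joining the tail `i_k` of the `k`-th removed edge to the head `i_{σ k} + 1` of the
`σ k`-th one. The removed edges themselves are the case `σ = id`. -/
def tailHeadEdge (σ : Fin 4 → Fin 4) (k : Fin 4) : Sym2 (ZMod n) :=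
  s((S.i k : ZMod n), (S.i (σ k) : ZMod n) + 1)

theorem tailHeadEdge_injective (σ : Fin 4 → Fin 4) : Function.Injective (S.tailHeadEdge σ) := by
  intro h k hk
  rcases Sym2.eq_iff.1 hk with ⟨tail_eq, -⟩ | ⟨tail_eq_head, -⟩
  · exact S.natCast_i_injective tail_eq
  · exact absurd tail_eq_head (S.natCast_i_ne_natCast_i_add_one h (σ k))

theorem sum_pairCost_image_tailHeadEdge (c : ZMod n → ZMod n → ℝ) (hc : ∀ x y, c x y = c y x)
    (σ : Fin 4 → Fin 4) :
    ∑ e ∈ Finset.univ.image (S.tailHeadEdge σ), pairCost c hc e =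
      ∑ k, c (S.i k) (S.i (σ k) + 1) :=
  Finset.sum_image (S.tailHeadEdge_injective σ).injOn

theorem removalSet_eq_image_tailHeadEdge :
    removalSet S = Finset.univ.image (S.tailHeadEdge id) :=
  rfl

end CompleteSelection

/-- The reinsertion set joining each label `l` to the primed label `(σ l)'`. Positions are indexed
from `0` by `Fin 4`, as in `CompleteSelection.i`, so position `k` carries the label `k + 1`. -/
def tailHeadReins (σ : Fin 4 → Fin 4) : Finset (Sym2 Label) :=
  Finset.univ.image fun k : Fin 4 => s(((k : ℕ) + 1, false), ((σ k : ℕ) + 1, true))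

theorem reins_two_bridges : reins (4, 3, 2) = tailHeadReins (· + 2) := by
  decide

section Gain

variable {n : ℕ} (S : CompleteSelection n)

theorem instLabel_natCast_add_one (k : Fin 4) (b : Bool) :
    instLabel S ((k : ℕ) + 1, b) = S.i k + if b then 1 else 0 := by
  fin_cases k <;> rfl

theorem image_instLabel_tailHeadReins (σ : Fin 4 → Fin 4) :
    (tailHeadReins σ).image (Sym2.map (instLabel S)) = Finset.univ.image (S.tailHeadEdge σ) := by
  rw [tailHeadReins, Finset.image_image]
  refine Finset.image_congr fun k _ => ?_
  simp [CompleteSelection.tailHeadEdge, instLabel_natCast_add_one]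

theorem gain_eq_sum_of_reins_eq_tailHeadReins (c : ZMod n → ZMod n → ℝ)
    (hc : ∀ x y, c x y = c y x) {r : Scheme} {σ : Fin 4 → Fin 4} (hr : reins r = tailHeadReins σ) :
    gain c hc S r = ∑ k, (c (S.i k) (S.i k + 1) - c (S.i k) (S.i (σ k) + 1)) := by
  rw [gain, instReins, hr, image_instLabel_tailHeadReins, S.removalSet_eq_image_tailHeadEdge,
    S.sum_pairCost_image_tailHeadEdge, S.sum_pairCost_image_tailHeadEdge, Finset.sum_sub_distrib]
  rfl

theorem costD_eq_add_of_symm (c : ZMod n → ZMod n → ℝ) (hc : ∀ x y, c x y = c y x)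
    (a b : ZMod n) :
    costD c a b = (c a (a + 1) - c a (b + 1)) + (c b (b + 1) - c b (a + 1)) := by
  rw [costD, hc (a + 1) b]
  ring

end Gain

/-- The gain of the two-bridges move `r₂₅ = (+4,+3,+2)` decomposes as the sum of
two parallel-bridge costs: `Δ_{r₂₅}(i₁,i₂,i₃,i₄) = cost_d(i₁,i₃) + cost_d(i₂,i₄)`. -/
theorem gain_two_bridges (n : ℕ) (hn : 8 ≤ n) (c : ZMod n → ZMod n → ℝ)
    (hc : ∀ x y, c x y = c y x) (S : CompleteSelection n) :
    gain c hc S (4, 3, 2) =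
      costD c (S.i 0 : ZMod n) (S.i 2 : ZMod n) +
      costD c (S.i 1 : ZMod n) (S.i 3 : ZMod n) := by
  rw [gain_eq_sum_of_reins_eq_tailHeadReins S c hc reins_two_bridges, Fin.sum_univ_four,
    costD_eq_add_of_symm c hc, costD_eq_add_of_symm c hc]
  have opposite_two : (2 + 2 : Fin 4) = 0 := rfl
  have opposite_three : (3 + 2 : Fin 4) = 1 := rfl
  have opposite_one : (1 + 2 : Fin 4) = 3 := rfl
  rw [zero_add, opposite_one, opposite_two, opposite_three]
  ring
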